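/- arXiv:2206.15339 — 13 statements merged into one kernel-verified Lean document; each statement's English description precedes it below -/
import Mathlib

section
/- Let A and B be nonempty compact subsets of the Euclidean plane with Hausdorff distance hausdorffDist A B = 1, and let α ∈ [0,1]. Then the Voronoi morph T_α(A,B) satisfies hausdorffDist A (T_α(A,B)) = α and hausdorffDist B (T_α(A,B)) = 1 − α. -/
open Metric Set Pointwise

noncomputable section

/-- The Euclidean plane. -/
abbrev Plane := EuclideanSpace ℝ (Fin 2)

/-- The Voronoi morph: each point of `A` is moved a fraction `α` of the way towards a
nearest point of `B`, and each point of `B` is moved a fraction `1 - α` of the way towards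
a nearest point of `A`; all nearest points are used when they are not unique. -/
def voronoiMorph (A B : Set Plane) (α : ℝ) : Set Plane :=
  {p | ∃ a ∈ A, ∃ b ∈ B, dist a b = Metric.infDist a B ∧ p = (1 - α) • a + α • b} ∪
  {p | ∃ b ∈ B, ∃ a ∈ A, dist b a = Metric.infDist b A ∧ p = (1 - α) • a + α • b}

/-- The dilation morph `S_α(A,B) = (A ⊕ D_α) ∩ (B ⊕ D_{1-α})`. -/
def dilationMorph (A B : Set Plane) (α : ℝ) : Set Plane :=
  (A + Metric.closedBall (0 : Plane) α) ∩ (B + Metric.closedBall (0 : Plane) (1 - α))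

/-- The closing of a set by a disk of radius `φ`: dilation followed by erosion. -/
def closing (X : Set Plane) (φ : ℝ) : Set Plane :=
  ((X + Metric.closedBall (0 : Plane) φ)ᶜ + Metric.closedBall (0 : Plane) φ)ᶜ

/-- The mixed morph `M_{α,φ}(A,B)`. -/
def mixedMorph (A B : Set Plane) (α φ : ℝ) : Set Plane :=
  closing (voronoiMorph A B α) φ ∩ dilationMorph A B α

theorem voronoiMorph_hausdorffDist (A B : Set Plane) (hAne : A.Nonempty) (hBne : B.Nonempty)
    (hA : IsCompact A) (hB : IsCompact B) (hAB : Metric.hausdorffDist A B = 1)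
    (α : ℝ) (hα : α ∈ Set.Icc (0 : ℝ) 1) :
    Metric.hausdorffDist A (voronoiMorph A B α) = α ∧
    Metric.hausdorffDist B (voronoiMorph A B α) = 1 - α := by
  obtain ⟨h0, h1⟩ := hα
  have finAB : hausdorffEDist A B ≠ ⊤ :=
    hausdorffEDist_ne_top_of_nonempty_of_bounded hAne hBne hA.isBounded hB.isBounded
  have finBA : hausdorffEDist B A ≠ ⊤ :=
    hausdorffEDist_ne_top_of_nonempty_of_bounded hBne hAne hB.isBounded hA.isBounded
  have hAB1 : ∀ a ∈ A, infDist a B ≤ 1 := fun a ha =>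
    hAB ▸ infDist_le_hausdorffDist_of_mem ha finAB
  have hBA1 : ∀ b ∈ B, infDist b A ≤ 1 := fun b hb => by
    have h := infDist_le_hausdorffDist_of_mem hb finBA
    rwa [hausdorffDist_comm, hAB] at h
  have dA : ∀ a b : Plane, dist a b ≤ 1 → dist a ((1 - α) • a + α • b) ≤ α := by
    intro a b h
    have e : a - ((1 - α) • a + α • b) = α • (a - b) := by module
    rw [dist_eq_norm, e, norm_smul, Real.norm_of_nonneg h0, ← dist_eq_norm]
    nlinarith
  have dB : ∀ a b : Plane, dist a b ≤ 1 → dist b ((1 - α) • a + α • b) ≤ 1 - α := by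
    intro a b h
    have e : b - ((1 - α) • a + α • b) = (1 - α) • (b - a) := by module
    rw [dist_eq_norm, e, norm_smul, Real.norm_of_nonneg (by linarith), ← dist_eq_norm,
      dist_comm]
    nlinarith
  have toA : ∀ a ∈ A, ∃ b ∈ B, dist a b ≤ 1 ∧ (1 - α) • a + α • b ∈ voronoiMorph A B α := by
    intro a ha
    obtain ⟨b, hb, h⟩ := hB.exists_infDist_eq_dist hBne a
    exact ⟨b, hb, h ▸ hAB1 a ha, Or.inl ⟨a, ha, b, hb, h.symm, rfl⟩⟩
  have toB : ∀ b ∈ B, ∃ a ∈ A, dist a b ≤ 1 ∧ (1 - α) • a + α • b ∈ voronoiMorph A B α := by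
    intro b hb
    obtain ⟨a, ha, h⟩ := hA.exists_infDist_eq_dist hAne b
    exact ⟨a, ha, dist_comm b a ▸ h ▸ hBA1 b hb, Or.inr ⟨b, hb, a, ha, h.symm, rfl⟩⟩
  have ofT : ∀ p ∈ voronoiMorph A B α, ∃ a ∈ A, ∃ b ∈ B, dist a b ≤ 1 ∧
      p = (1 - α) • a + α • b := by
    rintro p (⟨a, ha, b, hb, h, rfl⟩ | ⟨b, hb, a, ha, h, rfl⟩)
    · exact ⟨a, ha, b, hb, h ▸ hAB1 a ha, rfl⟩
    · exact ⟨a, ha, b, hb, by rw [dist_comm, h]; exact hBA1 b hb, rfl⟩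
  have hAT : hausdorffDist A (voronoiMorph A B α) ≤ α := by
    apply hausdorffDist_le_of_mem_dist h0
    · intro a ha
      obtain ⟨b, _, h, hT⟩ := toA a ha
      exact ⟨_, hT, dA a b h⟩
    · intro p hp
      obtain ⟨a, ha, b, _, h, rfl⟩ := ofT p hp
      exact ⟨a, ha, by rw [dist_comm]; exact dA a b h⟩
  have hBT : hausdorffDist B (voronoiMorph A B α) ≤ 1 - α := by
    apply hausdorffDist_le_of_mem_dist (by linarith)
    · intro b hb
      obtain ⟨a, _, h, hT⟩ := toB b hb
      exact ⟨_, hT, dB a b h⟩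
    · intro p hp
      obtain ⟨a, _, b, hb, h, rfl⟩ := ofT p hp
      exact ⟨b, hb, by rw [dist_comm]; exact dB a b h⟩
  have neT : (voronoiMorph A B α).Nonempty := by
    obtain ⟨a, ha⟩ := hAne
    obtain ⟨b, _, _, hT⟩ := toA a ha
    exact ⟨_, hT⟩
  have bdT : Bornology.IsBounded (voronoiMorph A B α) := by
    refine (hA.isBounded.cthickening (δ := α)).subset ?_
    intro p hp
    obtain ⟨a, ha, b, _, h, rfl⟩ := ofT p hp
    exact mem_cthickening_of_dist_le _ a _ _ ha (by rw [dist_comm]; exact dA a b h)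
  have tri : hausdorffDist A B ≤
      hausdorffDist A (voronoiMorph A B α) + hausdorffDist (voronoiMorph A B α) B :=
    hausdorffDist_triangle
      (hausdorffEDist_ne_top_of_nonempty_of_bounded hAne neT hA.isBounded bdT)
  rw [hAB, hausdorffDist_comm (s := voronoiMorph A B α)] at tri
  constructor <;> linarith
end
end

section
/- Let A and B be nonempty compact subsets of the Euclidean plane with hausdorffDist A B ≤ 1, and let α ∈ [0,1]. Then hausdorffDist A (T_α(A,B)) ≤ α and hausdorffDist B (T_α(A,B)) ≤ 1 − α. -/
open Metric Set Pointwise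

noncomputable section

theorem voronoiMorph_hausdorffDist_le (A B : Set Plane) (hAne : A.Nonempty) (hBne : B.Nonempty)
    (hA : IsCompact A) (hB : IsCompact B) (hAB : Metric.hausdorffDist A B ≤ 1)
    (α : ℝ) (hα : α ∈ Set.Icc (0 : ℝ) 1) :
    Metric.hausdorffDist A (voronoiMorph A B α) ≤ α ∧
    Metric.hausdorffDist B (voronoiMorph A B α) ≤ 1 - α := by
  obtain ⟨h0, h1⟩ := hα
  have fin := hausdorffEDist_ne_top_of_nonempty_of_bounded hAne hBne hA.isBounded hB.isBounded
  have hAd : ∀ a ∈ A, infDist a B ≤ 1 := fun a ha =>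
    (infDist_le_hausdorffDist_of_mem ha fin).trans hAB
  have hBd : ∀ b ∈ B, infDist b A ≤ 1 := fun b hb => by
    rw [hausdorffDist_comm] at hAB
    rw [hausdorffEDist_comm] at fin
    exact (infDist_le_hausdorffDist_of_mem hb fin).trans hAB
  have da : ∀ a b : Plane, dist a b ≤ 1 → dist a ((1 - α) • a + α • b) ≤ α := by
    intro a b h
    have e : a - ((1 - α) • a + α • b) = α • (a - b) := by module
    rw [dist_eq_norm, e, norm_smul, Real.norm_of_nonneg h0, ← dist_eq_norm]
    exact mul_le_of_le_one_right h0 h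
  have db : ∀ a b : Plane, dist a b ≤ 1 → dist b ((1 - α) • a + α • b) ≤ 1 - α := by
    intro a b h
    have e : b - ((1 - α) • a + α • b) = (1 - α) • (b - a) := by module
    rw [dist_eq_norm, e, norm_smul, Real.norm_of_nonneg (by linarith), ← dist_eq_norm, dist_comm]
    exact mul_le_of_le_one_right (by linarith) h
  have hT : ∀ p ∈ voronoiMorph A B α, ∃ a ∈ A, ∃ b ∈ B, dist a b ≤ 1 ∧
      p = (1 - α) • a + α • b := by
    rintro p (⟨a, ha, b, hb, h, rfl⟩ | ⟨b, hb, a, ha, h, rfl⟩)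
    · exact ⟨a, ha, b, hb, h ▸ hAd a ha, rfl⟩
    · exact ⟨a, ha, b, hb, by rw [dist_comm, h]; exact hBd b hb, rfl⟩
  constructor
  · refine hausdorffDist_le_of_mem_dist h0 (fun a ha => ?_) (fun p hp => ?_)
    · obtain ⟨b, hb, h⟩ := hB.exists_infDist_eq_dist hBne a
      exact ⟨_, Or.inl ⟨a, ha, b, hb, h.symm, rfl⟩, da a b (h ▸ hAd a ha)⟩
    · obtain ⟨a, ha, b, hb, h, rfl⟩ := hT p hp
      exact ⟨a, ha, by rw [dist_comm]; exact da a b h⟩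
  · refine hausdorffDist_le_of_mem_dist (by linarith) (fun b hb => ?_) (fun p hp => ?_)
    · obtain ⟨a, ha, h⟩ := hA.exists_infDist_eq_dist hAne b
      exact ⟨_, Or.inr ⟨b, hb, a, ha, h.symm, rfl⟩,
        db a b (by rw [dist_comm, ← h]; exact hBd b hb)⟩
    · obtain ⟨a, ha, b, hb, h, rfl⟩ := hT p hp
      exact ⟨b, hb, by rw [dist_comm]; exact db a b h⟩
end
end

section
/- Let A and B be nonempty compact subsets of the Euclidean plane with hausdorffDist A B = 1, and let α, β ∈ [0,1]. Then hausdorffDist (T_α(A,B)) (T_β(A,B)) ≤ |β − α|. -/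
open Metric Set Pointwise

noncomputable section

theorem voronoiMorph_step (A B : Set Plane) (hAne : A.Nonempty) (hBne : B.Nonempty)
    (hA : IsCompact A) (hB : IsCompact B) (hAB : Metric.hausdorffDist A B = 1)
    (α β : ℝ) : ∀ x ∈ voronoiMorph A B α, ∃ y ∈ voronoiMorph A B β, dist x y ≤ |β - α| := by
  have fin := Metric.hausdorffEDist_ne_top_of_nonempty_of_bounded hAne hBne
    hA.isBounded hB.isBounded
  have fin' := Metric.hausdorffEDist_ne_top_of_nonempty_of_bounded hBne hAne
    hB.isBounded hA.isBounded
  have key : ∀ a b : Plane, dist a b ≤ 1 →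
      dist ((1 - α) • a + α • b) ((1 - β) • a + β • b) ≤ |β - α| := by
    intro a b h
    have e : ((1 - α) • a + α • b) - ((1 - β) • a + β • b) = (β - α) • (a - b) := by module
    rw [dist_eq_norm, e, norm_smul, Real.norm_eq_abs, ← dist_eq_norm]
    exact mul_le_of_le_one_right (abs_nonneg _) h
  rintro x (⟨a, ha, b, hb, h, rfl⟩ | ⟨b, hb, a, ha, h, rfl⟩)
  · refine ⟨_, Or.inl ⟨a, ha, b, hb, h, rfl⟩, key a b ?_⟩
    rw [h, ← hAB]
    exact Metric.infDist_le_hausdorffDist_of_mem ha fin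
  · refine ⟨_, Or.inr ⟨b, hb, a, ha, h, rfl⟩, key a b ?_⟩
    rw [dist_comm, h, ← hAB, Metric.hausdorffDist_comm]
    exact Metric.infDist_le_hausdorffDist_of_mem hb fin'

theorem voronoiMorph_lipschitz (A B : Set Plane) (hAne : A.Nonempty) (hBne : B.Nonempty)
    (hA : IsCompact A) (hB : IsCompact B) (hAB : Metric.hausdorffDist A B = 1)
    (α β : ℝ) (hα : α ∈ Set.Icc (0 : ℝ) 1) (hβ : β ∈ Set.Icc (0 : ℝ) 1) :
    Metric.hausdorffDist (voronoiMorph A B α) (voronoiMorph A B β) ≤ |β - α| := by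
  refine Metric.hausdorffDist_le_of_mem_dist (abs_nonneg _)
    (voronoiMorph_step A B hAne hBne hA hB hAB α β) ?_
  rw [abs_sub_comm]
  exact voronoiMorph_step A B hAne hBne hA hB hAB β α
end
end

section
/- Let B be a nonempty compact subset of the Euclidean plane, let a₁, a₂ be points of the plane, and let b₁, b₂ ∈ B satisfy dist a₁ b₁ = Metric.infDist a₁ B and dist a₂ b₂ = Metric.infDist a₂ B (i.e., bᵢ is a nearest point of B to aᵢ). If a point p lies on both closed segments [a₁, b₁] and [a₂, b₂], then dist p b₁ = dist p b₂. -/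
open Metric Set Pointwise

noncomputable section

theorem shortest_paths_meet_dist_eq (B : Set Plane) (hBne : B.Nonempty) (hB : IsCompact B)
    (a₁ a₂ : Plane) (b₁ b₂ : Plane) (hb₁ : b₁ ∈ B) (hb₂ : b₂ ∈ B)
    (h₁ : dist a₁ b₁ = Metric.infDist a₁ B) (h₂ : dist a₂ b₂ = Metric.infDist a₂ B)
    (p : Plane) (hp₁ : p ∈ segment ℝ a₁ b₁) (hp₂ : p ∈ segment ℝ a₂ b₂) :
    dist p b₁ = dist p b₂ := by
  have e₁ := dist_add_dist_of_mem_segment hp₁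
  have e₂ := dist_add_dist_of_mem_segment hp₂
  have m₁ := Metric.infDist_le_dist_of_mem (x := a₁) hb₂
  have m₂ := Metric.infDist_le_dist_of_mem (x := a₂) hb₁
  have t₁ := dist_triangle a₁ p b₂
  have t₂ := dist_triangle a₂ p b₁
  linarith
end
end

section
/- Let B be a nonempty compact subset of the Euclidean plane, let a₁, a₂ be points of the plane, and let b₁, b₂ ∈ B satisfy dist a₁ b₁ = Metric.infDist a₁ B and dist a₂ b₂ = Metric.infDist a₂ B. If some point p lies on both closed segments [a₁, b₁] and [a₂, b₂], then dist a₂ b₁ = Metric.infDist a₂ B, i.e., b₁ is also a nearest point of B to a₂. -/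
open Metric Set Pointwise

noncomputable section

theorem shortest_paths_meet_nearest (B : Set Plane) (hBne : B.Nonempty) (hB : IsCompact B)
    (a₁ a₂ : Plane) (b₁ b₂ : Plane) (hb₁ : b₁ ∈ B) (hb₂ : b₂ ∈ B)
    (h₁ : dist a₁ b₁ = Metric.infDist a₁ B) (h₂ : dist a₂ b₂ = Metric.infDist a₂ B)
    (p : Plane) (hp₁ : p ∈ segment ℝ a₁ b₁) (hp₂ : p ∈ segment ℝ a₂ b₂) :
    dist a₂ b₁ = Metric.infDist a₂ B := by
  have e₁ := dist_add_dist_of_mem_segment hp₁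
  have e₂ := dist_add_dist_of_mem_segment hp₂
  have i₁ : Metric.infDist a₁ B ≤ dist a₁ b₂ := Metric.infDist_le_dist_of_mem hb₂
  have i₂ : Metric.infDist a₂ B ≤ dist a₂ b₁ := Metric.infDist_le_dist_of_mem hb₁
  have t₁ := dist_triangle a₁ p b₂
  have t₂ := dist_triangle a₂ p b₁
  linarith
end
end

section
/- Let B be a nonempty compact subset of the Euclidean plane and let α ∈ (0,1). Let a₁, a₂ be points of the plane and let b₁, b₂ ∈ B satisfy dist a₁ b₁ = Metric.infDist a₁ B and dist a₂ b₂ = Metric.infDist a₂ B. If (1−α)•a₁ + α•b₁ = (1−α)•a₂ + α•b₂, then a₁ = a₂ and b₁ = b₂. In other words, for α strictly between 0 and 1, the map sending a point together with a nearest point of B to the convex combination at parameter α is injective. -/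
open Metric Set Pointwise

noncomputable section

theorem voronoiMorph_combination_injective (B : Set Plane) (hBne : B.Nonempty)
    (hB : IsCompact B) (α : ℝ) (hα : α ∈ Set.Ioo (0 : ℝ) 1)
    (a₁ a₂ : Plane) (b₁ b₂ : Plane) (hb₁ : b₁ ∈ B) (hb₂ : b₂ ∈ B)
    (h₁ : dist a₁ b₁ = Metric.infDist a₁ B) (h₂ : dist a₂ b₂ = Metric.infDist a₂ B)
    (heq : (1 - α) • a₁ + α • b₁ = (1 - α) • a₂ + α • b₂) :
    a₁ = a₂ ∧ b₁ = b₂ := by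
  obtain ⟨h0, h1⟩ := hα
  have k₁ : dist a₁ b₁ ≤ dist a₁ b₂ := h₁ ▸ Metric.infDist_le_dist_of_mem hb₂
  have k₂ : dist a₂ b₂ ≤ dist a₂ b₁ := h₂ ▸ Metric.infDist_le_dist_of_mem hb₁
  have e0 := congrArg (fun v : Plane => v 0) heq
  have e1 := congrArg (fun v : Plane => v 1) heq
  simp only [PiLp.add_apply, PiLp.smul_apply, smul_eq_mul] at e0 e1
  have q₁ := pow_le_pow_left₀ dist_nonneg k₁ 2
  have q₂ := pow_le_pow_left₀ dist_nonneg k₂ 2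
  simp only [EuclideanSpace.dist_sq_eq, Fin.sum_univ_two, Real.dist_eq, sq_abs] at q₁ q₂
  have hin : 0 ≤ (a₁ 0 - a₂ 0) * (b₁ 0 - b₂ 0) + (a₁ 1 - a₂ 1) * (b₁ 1 - b₂ 1) := by
    nlinarith
  have hkey : (1 - α) * ((a₁ 0 - a₂ 0) * (b₁ 0 - b₂ 0) + (a₁ 1 - a₂ 1) * (b₁ 1 - b₂ 1))
      = -(α * ((b₁ 0 - b₂ 0) ^ 2 + (b₁ 1 - b₂ 1) ^ 2)) := by
    linear_combination (b₁ 0 - b₂ 0) * e0 + (b₁ 1 - b₂ 1) * e1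
  have hpos := mul_nonneg (sub_nonneg.2 h1.le) hin
  have hs : (b₁ 0 - b₂ 0) ^ 2 + (b₁ 1 - b₂ 1) ^ 2 ≤ 0 := by
    by_contra! hc
    have := mul_pos h0 hc
    linarith
  have hb0 : b₁ 0 - b₂ 0 = 0 := by
    apply pow_eq_zero_iff (two_ne_zero) |>.1
    nlinarith [sq_nonneg (b₁ 0 - b₂ 0), sq_nonneg (b₁ 1 - b₂ 1)]
  have hb1 : b₁ 1 - b₂ 1 = 0 := by
    apply pow_eq_zero_iff (two_ne_zero) |>.1
    nlinarith [sq_nonneg (b₁ 0 - b₂ 0), sq_nonneg (b₁ 1 - b₂ 1)]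
  have hb : b₁ = b₂ := by
    ext i
    fin_cases i
    · exact sub_eq_zero.1 hb0
    · exact sub_eq_zero.1 hb1
  subst hb
  exact ⟨smul_right_injective Plane (sub_pos.2 h1).ne' (add_right_cancel heq), rfl⟩
end
end

section
/- Let A and B be nonempty compact subsets of the Euclidean plane, let α ∈ [0,1], and let φ, ψ be nonnegative reals with φ ≤ ψ. Then the mixed morphs satisfy M_{α,φ}(A,B) ⊆ M_{α,ψ}(A,B). -/
open Metric Set Pointwise

noncomputable section

theorem mixedMorph_mono (A B : Set Plane) (hAne : A.Nonempty) (hBne : B.Nonempty)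
    (hA : IsCompact A) (hB : IsCompact B) (α : ℝ) (hα : α ∈ Set.Icc (0 : ℝ) 1)
    (φ ψ : ℝ) (hφ : 0 ≤ φ) (hψ : 0 ≤ ψ) (hφψ : φ ≤ ψ) :
    mixedMorph A B α φ ⊆ mixedMorph A B α ψ := by
  rintro x ⟨hx, hS⟩
  refine ⟨?_, hS⟩
  have key : closedBall (0 : Plane) φ + closedBall (0 : Plane) (ψ - φ) = closedBall 0 ψ := by
    rw [closedBall_add_closedBall hφ (sub_nonneg.2 hφψ)]
    simp
  intro hx2
  obtain ⟨y, hy, w, hw, rfl⟩ := hx2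
  rw [← key] at hw
  obtain ⟨u, hu, v, hv, rfl⟩ := hw
  apply hx
  refine ⟨y + v, ?_, u, hu, by simp only; abel⟩
  intro hyv
  apply hy
  rw [← key, ← add_assoc]
  refine ⟨y + v, hyv, -v, by simpa using hv, by simp⟩
end
end

section
/- Let E be a real normed vector space, let X ⊆ E, and let φ, ψ be nonnegative reals with φ ≤ ψ. Then the closing of X by radius φ is contained in the closing of X by radius ψ: ((X + D_φ)ᶜ + D_φ)ᶜ ⊆ ((X + D_ψ)ᶜ + D_ψ)ᶜ, where D_r = Metric.closedBall 0 r. -/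
open Metric Set Pointwise

theorem closing_mono_radius {E : Type*} [NormedAddCommGroup E] [NormedSpace ℝ E]
    (X : Set E) (φ ψ : ℝ) (hφ : 0 ≤ φ) (hψ : 0 ≤ ψ) (hφψ : φ ≤ ψ) :
    ((X + Metric.closedBall (0 : E) φ)ᶜ + Metric.closedBall (0 : E) φ)ᶜ ⊆
      ((X + Metric.closedBall (0 : E) ψ)ᶜ + Metric.closedBall (0 : E) ψ)ᶜ := by
  apply Set.compl_subset_compl.mpr
  rintro p ⟨a, ha, b, hb, rfl⟩
  rw [mem_closedBall_zero_iff] at hb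
  obtain ⟨t, ht0, ht1, ht⟩ : ∃ t : ℝ, 0 ≤ t ∧ t ≤ 1 ∧ t * ψ = φ := by
    rcases hψ.eq_or_lt with h | h
    · exact ⟨0, le_rfl, zero_le_one, by linarith⟩
    · exact ⟨φ / ψ, by positivity, (div_le_one h).mpr hφψ, div_mul_cancel₀ _ h.ne'⟩
  have h1 : ‖t • b‖ ≤ φ := by
    rw [norm_smul, Real.norm_of_nonneg ht0, ← ht]
    gcongr
  have h2 : ‖(1 - t) • b‖ ≤ ψ - φ := by
    rw [norm_smul, Real.norm_of_nonneg (by linarith)]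
    nlinarith
  refine ⟨a + (1 - t) • b, ?_, t • b, mem_closedBall_zero_iff.mpr h1, ?_⟩
  · rintro ⟨x, hx, d, hd, hxd⟩
    rw [mem_closedBall_zero_iff] at hd
    refine ha ⟨x, hx, d - (1 - t) • b, ?_, ?_⟩
    · rw [mem_closedBall_zero_iff]
      linarith [norm_sub_le d ((1 - t) • b)]
    · simp only at hxd ⊢
      rw [← add_sub_assoc, hxd, add_sub_cancel_right]
  · simp only
    module
end

section
/- Let A and B be nonempty compact subsets of the Euclidean plane with hausdorffDist A B ≤ 1, and let α ∈ [0,1]. Then the Voronoi morph is contained in the dilation morph: T_α(A,B) ⊆ S_α(A,B). -/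
open Metric Set Pointwise

noncomputable section

theorem voronoiMorph_subset_dilationMorph (A B : Set Plane) (hAne : A.Nonempty)
    (hBne : B.Nonempty) (hA : IsCompact A) (hB : IsCompact B)
    (hAB : Metric.hausdorffDist A B ≤ 1) (α : ℝ) (hα : α ∈ Set.Icc (0 : ℝ) 1) :
    voronoiMorph A B α ⊆ dilationMorph A B α := by
  obtain ⟨h0, h1⟩ := hα
  have fin : hausdorffEDist A B ≠ ⊤ :=
    hausdorffEDist_ne_top_of_nonempty_of_bounded hAne hBne hA.isBounded hB.isBounded
  have fin2 : hausdorffEDist B A ≠ ⊤ :=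
    hausdorffEDist_ne_top_of_nonempty_of_bounded hBne hAne hB.isBounded hA.isBounded
  have key : ∀ a ∈ A, ∀ b ∈ B, dist a b ≤ 1 →
      (1 - α) • a + α • b ∈ dilationMorph A B α := by
    intro a ha b hb hab
    refine ⟨Set.mem_add.2 ⟨a, ha, α • (b - a), ?_, by module⟩,
      Set.mem_add.2 ⟨b, hb, (1 - α) • (a - b), ?_, by module⟩⟩
    · rw [mem_closedBall_zero_iff, norm_smul, Real.norm_of_nonneg h0, ← dist_eq_norm, dist_comm]
      exact mul_le_of_le_one_right h0 hab
    · rw [mem_closedBall_zero_iff, norm_smul, Real.norm_of_nonneg (sub_nonneg.2 h1),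
        ← dist_eq_norm]
      exact mul_le_of_le_one_right (sub_nonneg.2 h1) hab
  rintro p (⟨a, ha, b, hb, h, rfl⟩ | ⟨b, hb, a, ha, h, rfl⟩)
  · exact key a ha b hb (h.le.trans ((infDist_le_hausdorffDist_of_mem ha fin).trans hAB))
  · refine key a ha b hb ?_
    rw [dist_comm]
    refine h.le.trans ((infDist_le_hausdorffDist_of_mem hb fin2).trans ?_)
    rwa [hausdorffDist_comm]
end
end

section
/- Let A and B be nonempty compact subsets of the Euclidean plane with hausdorffDist A B ≤ 1, let α ∈ [0,1] and φ ≥ 0. Then the Voronoi morph is contained in the mixed morph: T_α(A,B) ⊆ M_{α,φ}(A,B). -/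
open Metric Set Pointwise

noncomputable section

theorem subset_closing_aux (X : Set Plane) (φ : ℝ) : X ⊆ closing X φ := by
  intro x hx hmem
  obtain ⟨y, hy, d, hd, hyd⟩ := Set.mem_add.1 hmem
  apply hy
  refine Set.mem_add.2 ⟨x, hx, -d, ?_, ?_⟩
  · simpa using hd
  · rw [← hyd]; abel

theorem mem_dilationMorph_aux (A B : Set Plane) (α : ℝ) (hα : α ∈ Set.Icc (0 : ℝ) 1)
    (a b : Plane) (ha : a ∈ A) (hb : b ∈ B) (h : dist a b ≤ 1) :
    (1 - α) • a + α • b ∈ dilationMorph A B α := by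
  obtain ⟨h0, h1⟩ := hα
  constructor
  · refine Set.mem_add.2 ⟨a, ha, α • (b - a), ?_, ?_⟩
    · rw [mem_closedBall_zero_iff, norm_smul, Real.norm_of_nonneg h0, ← dist_eq_norm, dist_comm]
      nlinarith
    · module
  · refine Set.mem_add.2 ⟨b, hb, (1 - α) • (a - b), ?_, ?_⟩
    · rw [mem_closedBall_zero_iff, norm_smul, Real.norm_of_nonneg (by linarith), ← dist_eq_norm]
      nlinarith
    · module

theorem voronoiMorph_subset_mixedMorph (A B : Set Plane) (hAne : A.Nonempty)
    (hBne : B.Nonempty) (hA : IsCompact A) (hB : IsCompact B)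
    (hAB : Metric.hausdorffDist A B ≤ 1) (α : ℝ) (hα : α ∈ Set.Icc (0 : ℝ) 1)
    (φ : ℝ) (hφ : 0 ≤ φ) :
    voronoiMorph A B α ⊆ mixedMorph A B α φ := by
  have hfin : Metric.hausdorffEDist A B ≠ ⊤ :=
    Metric.hausdorffEDist_ne_top_of_nonempty_of_bounded hAne hBne hA.isBounded hB.isBounded
  intro p hp
  refine ⟨subset_closing_aux _ φ hp, ?_⟩
  rcases hp with ⟨a, ha, b, hb, hd, rfl⟩ | ⟨b, hb, a, ha, hd, rfl⟩
  · apply mem_dilationMorph_aux A B α hα a b ha hb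
    rw [hd]
    exact (Metric.infDist_le_hausdorffDist_of_mem ha hfin).trans hAB
  · apply mem_dilationMorph_aux A B α hα a b ha hb
    rw [dist_comm, hd]
    rw [Metric.hausdorffEDist_comm] at hfin
    rw [Metric.hausdorffDist_comm] at hAB
    exact (Metric.infDist_le_hausdorffDist_of_mem hb hfin).trans hAB
end
end

section
/- Let A and B be nonempty compact subsets of the Euclidean plane with hausdorffDist A B = 1, let α ∈ [0,1] and φ ≥ 0. Then the mixed morph satisfies hausdorffDist A (M_{α,φ}(A,B)) = α and hausdorffDist B (M_{α,φ}(A,B)) = 1 − α; that is, the mixed morph is a Hausdorff morph. -/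
open Metric Set Pointwise

noncomputable section

theorem dist_left_aux (a b : Plane) (α : ℝ) (h0 : 0 ≤ α) :
    dist a ((1 - α) • a + α • b) = α * dist a b := by
  rw [dist_eq_norm, dist_eq_norm,
    show a - ((1 - α) • a + α • b) = α • (a - b) by module, norm_smul, Real.norm_of_nonneg h0]

theorem dist_right_aux (a b : Plane) (α : ℝ) (h1 : α ≤ 1) :
    dist b ((1 - α) • a + α • b) = (1 - α) * dist a b := by
  rw [dist_comm a b, dist_eq_norm, dist_eq_norm,
    show b - ((1 - α) • a + α • b) = (1 - α) • (b - a) by module, norm_smul,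
    Real.norm_of_nonneg (by linarith)]

theorem mem_dilate_aux (A : Set Plane) (r : ℝ) (p : Plane) :
    p ∈ A + Metric.closedBall (0 : Plane) r ↔ ∃ a ∈ A, dist a p ≤ r := by
  constructor
  · intro h
    obtain ⟨a, ha, z, hz, rfl⟩ := Set.mem_add.1 h
    refine ⟨a, ha, ?_⟩
    simpa [dist_eq_norm] using hz
  · rintro ⟨a, ha, h⟩
    refine Set.mem_add.2 ⟨a, ha, p - a, ?_, by abel⟩
    rw [dist_comm, dist_eq_norm] at h
    simpa using h

theorem mixedMorph_hausdorffDist (A B : Set Plane) (hAne : A.Nonempty) (hBne : B.Nonempty)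
    (hA : IsCompact A) (hB : IsCompact B) (hAB : Metric.hausdorffDist A B = 1)
    (α : ℝ) (hα : α ∈ Set.Icc (0 : ℝ) 1) (φ : ℝ) (hφ : 0 ≤ φ) :
    Metric.hausdorffDist A (mixedMorph A B α φ) = α ∧
    Metric.hausdorffDist B (mixedMorph A B α φ) = 1 - α := by
  obtain ⟨h0, h1⟩ := hα
  have hfin : Metric.hausdorffEDist A B ≠ ⊤ :=
    Metric.hausdorffEDist_ne_top_of_nonempty_of_bounded hAne hBne hA.isBounded hB.isBounded
  have hfin' : Metric.hausdorffEDist B A ≠ ⊤ := by rwa [Metric.hausdorffEDist_comm]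
  have hAinf : ∀ a ∈ A, Metric.infDist a B ≤ 1 := fun a ha =>
    hAB ▸ Metric.infDist_le_hausdorffDist_of_mem ha hfin
  have hBinf : ∀ b ∈ B, Metric.infDist b A ≤ 1 := fun b hb => by
    have := Metric.infDist_le_hausdorffDist_of_mem hb hfin'
    rwa [Metric.hausdorffDist_comm, hAB] at this
  have key : ∀ a ∈ A, ∀ b ∈ B, dist a b ≤ 1 →
      (1 - α) • a + α • b ∈ dilationMorph A B α ∧
      dist a ((1 - α) • a + α • b) ≤ α ∧ dist b ((1 - α) • a + α • b) ≤ 1 - α := by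
    intro a ha b hb hab
    have e1 : dist a ((1 - α) • a + α • b) ≤ α := by
      rw [dist_left_aux a b α h0]; nlinarith
    have e2 : dist b ((1 - α) • a + α • b) ≤ 1 - α := by
      rw [dist_right_aux a b α h1]; nlinarith
    exact ⟨⟨(mem_dilate_aux _ _ _).2 ⟨a, ha, e1⟩, (mem_dilate_aux _ _ _).2 ⟨b, hb, e2⟩⟩, e1, e2⟩
  have hAM : ∀ a ∈ A, ∃ p ∈ mixedMorph A B α φ, dist a p ≤ α := by
    intro a ha
    obtain ⟨b, hb, hab⟩ := hB.exists_infDist_eq_dist hBne a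
    obtain ⟨k1, k2, -⟩ := key a ha b hb (hab ▸ hAinf a ha)
    exact ⟨_, ⟨subset_closing_aux _ _ (Or.inl ⟨a, ha, b, hb, hab.symm, rfl⟩), k1⟩, k2⟩
  have hBM : ∀ b ∈ B, ∃ p ∈ mixedMorph A B α φ, dist b p ≤ 1 - α := by
    intro b hb
    obtain ⟨a, ha, hab⟩ := hA.exists_infDist_eq_dist hAne b
    obtain ⟨k1, -, k2⟩ := key a ha b hb (by rw [dist_comm]; exact hab ▸ hBinf b hb)
    exact ⟨_, ⟨subset_closing_aux _ _ (Or.inr ⟨b, hb, a, ha, hab.symm, rfl⟩), k1⟩, k2⟩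
  have hMne : (mixedMorph A B α φ).Nonempty := by
    obtain ⟨a, ha⟩ := hAne
    obtain ⟨p, hp, -⟩ := hAM a ha
    exact ⟨p, hp⟩
  have hMb : Bornology.IsBounded (mixedMorph A B α φ) :=
    (hA.isBounded.add Metric.isBounded_closedBall).subset (fun p hp => hp.2.1)
  have u1 : Metric.hausdorffDist A (mixedMorph A B α φ) ≤ α := by
    refine Metric.hausdorffDist_le_of_mem_dist h0 hAM ?_
    intro p hp
    obtain ⟨a, ha, h⟩ := (mem_dilate_aux _ _ _).1 hp.2.1
    exact ⟨a, ha, by rwa [dist_comm]⟩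
  have u2 : Metric.hausdorffDist B (mixedMorph A B α φ) ≤ 1 - α := by
    refine Metric.hausdorffDist_le_of_mem_dist (by linarith) hBM ?_
    intro p hp
    obtain ⟨a, ha, h⟩ := (mem_dilate_aux _ _ _).1 hp.2.2
    exact ⟨a, ha, by rwa [dist_comm]⟩
  have tri := Metric.hausdorffDist_triangle (s := A) (t := mixedMorph A B α φ) (u := B)
    (Metric.hausdorffEDist_ne_top_of_nonempty_of_bounded hAne hMne hA.isBounded hMb)
  rw [hAB, Metric.hausdorffDist_comm (s := mixedMorph A B α φ)] at tri
  constructor <;> linarith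
end
end

section
/- Let A and B be nonempty compact subsets of the Euclidean plane with hausdorffDist A B = 1, and let α ∈ [0,1]. Then the dilation morph S_α(A,B) satisfies hausdorffDist A (S_α(A,B)) = α and hausdorffDist B (S_α(A,B)) = 1 − α. -/
open Metric Set Pointwise

noncomputable section

lemma mem_dilationMorph_iff (A B : Set Plane) (α : ℝ) (p : Plane) :
    p ∈ dilationMorph A B α ↔ (∃ a ∈ A, dist p a ≤ α) ∧ (∃ b ∈ B, dist p b ≤ 1 - α) := by
  have key : ∀ (X : Set Plane) (r : ℝ),
      p ∈ X + Metric.closedBall (0 : Plane) r ↔ ∃ x ∈ X, dist p x ≤ r := by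
    intro X r
    constructor
    · rintro ⟨x, hx, y, hy, rfl⟩
      refine ⟨x, hx, ?_⟩
      simpa [dist_eq_norm] using hy
    · rintro ⟨x, hx, h⟩
      refine ⟨x, hx, p - x, ?_, by simp⟩
      simpa [dist_eq_norm] using h
  unfold dilationMorph
  rw [Set.mem_inter_iff, key, key]

lemma exists_dist_le_one (A B : Set Plane) (hAne : A.Nonempty) (hBne : B.Nonempty)
    (hA : IsCompact A) (hB : IsCompact B) (hAB : Metric.hausdorffDist A B = 1)
    (a : Plane) (ha : a ∈ A) : ∃ b ∈ B, dist a b ≤ 1 := by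
  obtain ⟨b, hb, h⟩ := hB.exists_infDist_eq_dist hBne a
  refine ⟨b, hb, ?_⟩
  rw [← h, ← hAB]
  exact Metric.infDist_le_hausdorffDist_of_mem ha
    (Metric.hausdorffEDist_ne_top_of_nonempty_of_bounded hAne hBne hA.isBounded hB.isBounded)

theorem dilationMorph_hausdorffDist (A B : Set Plane) (hAne : A.Nonempty) (hBne : B.Nonempty)
    (hA : IsCompact A) (hB : IsCompact B) (hAB : Metric.hausdorffDist A B = 1)
    (α : ℝ) (hα : α ∈ Set.Icc (0 : ℝ) 1) :
    Metric.hausdorffDist A (dilationMorph A B α) = α ∧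
    Metric.hausdorffDist B (dilationMorph A B α) = 1 - α := by
  obtain ⟨h0, h1⟩ := hα
  have hABp : ∀ a ∈ A, ∃ y ∈ dilationMorph A B α, dist a y ≤ α := by
    intro a ha
    obtain ⟨b, hb, hab⟩ := exists_dist_le_one A B hAne hBne hA hB hAB a ha
    obtain ⟨y, hy1, hy2⟩ := exists_dist_le_le (x := a) (z := b) h0
      (sub_nonneg.2 h1) (by linarith)
    exact ⟨y, (mem_dilationMorph_iff A B α y).2
      ⟨⟨a, ha, by rwa [dist_comm]⟩, ⟨b, hb, hy2⟩⟩, hy1⟩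
  have hBAp : ∀ b ∈ B, ∃ y ∈ dilationMorph A B α, dist b y ≤ 1 - α := by
    intro b hb
    obtain ⟨a, ha, hab⟩ := exists_dist_le_one B A hBne hAne hB hA
      (by rw [Metric.hausdorffDist_comm]; exact hAB) b hb
    obtain ⟨y, hy1, hy2⟩ := exists_dist_le_le (x := b) (z := a)
      (sub_nonneg.2 h1) h0 (by linarith)
    exact ⟨y, (mem_dilationMorph_iff A B α y).2
      ⟨⟨a, ha, hy2⟩, ⟨b, hb, by rwa [dist_comm]⟩⟩, hy1⟩
  have hSne : (dilationMorph A B α).Nonempty := by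
    obtain ⟨a, ha⟩ := hAne
    obtain ⟨y, hy, -⟩ := hABp a ha
    exact ⟨y, hy⟩
  have hSb : Bornology.IsBounded (dilationMorph A B α) :=
    (hA.isBounded.add Metric.isBounded_closedBall).subset Set.inter_subset_left
  have e1 : Metric.hausdorffDist A (dilationMorph A B α) ≤ α :=
    Metric.hausdorffDist_le_of_mem_dist h0 hABp
      (fun y hy => ((mem_dilationMorph_iff A B α y).1 hy).1)
  have e2 : Metric.hausdorffDist B (dilationMorph A B α) ≤ 1 - α :=
    Metric.hausdorffDist_le_of_mem_dist (sub_nonneg.2 h1) hBAp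
      (fun y hy => ((mem_dilationMorph_iff A B α y).1 hy).2)
  have e3 := Metric.hausdorffDist_triangle (u := B)
    (Metric.hausdorffEDist_ne_top_of_nonempty_of_bounded hAne hSne hA.isBounded hSb)
  rw [hAB, Metric.hausdorffDist_comm (s := dilationMorph A B α)] at e3
  constructor <;> linarith
end
end

section
/- Let A and B be nonempty compact subsets of the Euclidean plane and let α ∈ (0,1). Then the Lebesgue measure (area) of the Voronoi morph satisfies volume(T_α(A,B)) ≥ (1−α)² · volume(A) + α² · volume(B). -/
open Metric Set Pointwise

noncomputable section

/-- The half morph: points of `A` moved towards nearest points of `B`. -/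
def halfMorph (A B : Set Plane) (α : ℝ) : Set Plane :=
  {p | ∃ a ∈ A, ∃ b ∈ B, dist a b = Metric.infDist a B ∧ p = (1 - α) • a + α • b}

lemma dist_left_morph (a b : Plane) (α : ℝ) (h0 : 0 < α) :
    dist a ((1 - α) • a + α • b) = α * dist a b := by
  rw [dist_eq_norm, dist_eq_norm, show a - ((1 - α) • a + α • b) = α • (a - b) by module,
    norm_smul, Real.norm_of_nonneg h0.le]

lemma dist_right_morph (a b : Plane) (α : ℝ) (h1 : α < 1) :
    dist b ((1 - α) • a + α • b) = (1 - α) * dist a b := by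
  rw [dist_comm a b, dist_eq_norm, dist_eq_norm,
    show b - ((1 - α) • a + α • b) = (1 - α) • (b - a) by module,
    norm_smul, Real.norm_of_nonneg (by linarith)]

/-- The nearest-point relation is monotone, hence the morph expands distances up to `1 - α`. -/
lemma morph_expand (B : Set Plane) (α : ℝ) (h0 : 0 < α) (h1 : α < 1) (a a' b b' : Plane)
    (hb : b ∈ B) (hb' : b' ∈ B) (h : dist a b = infDist a B) (h' : dist a' b' = infDist a' B) :
    (1 - α) * dist a a' ≤ dist ((1 - α) • a + α • b) ((1 - α) • a' + α • b') := by
  have e1 : dist a b ≤ dist a b' := h ▸ infDist_le_dist_of_mem hb'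
  have e2 : dist a' b' ≤ dist a' b := h' ▸ infDist_le_dist_of_mem hb
  simp only [dist_eq_norm] at *
  have s1 : ‖a - b‖ ^ 2 ≤ ‖a - b'‖ ^ 2 := by gcongr
  have s2 : ‖a' - b'‖ ^ 2 ≤ ‖a' - b‖ ^ 2 := by gcongr
  have key : 0 ≤ inner ℝ (a - a') (b - b') := by
    simp only [← real_inner_self_eq_norm_sq, inner_sub_left, inner_sub_right] at *
    rw [real_inner_comm a b, real_inner_comm a b', real_inner_comm a' b,
      real_inner_comm a' b'] at *
    linarith
  have e : (1 - α) • a + α • b - ((1 - α) • a' + α • b')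
      = (1 - α) • (a - a') + α • (b - b') := by module
  rw [e]
  refine le_of_sq_le_sq ?_ (norm_nonneg _)
  rw [norm_add_sq_real, norm_smul, norm_smul, inner_smul_left, inner_smul_right,
    Real.norm_of_nonneg h0.le, Real.norm_of_nonneg (sub_nonneg.2 h1.le)]
  simp only [conj_trivial]
  have : 0 ≤ (1 - α) * (α * inner ℝ (a - a') (b - b')) :=
    mul_nonneg (by linarith) (mul_nonneg h0.le key)
  nlinarith [sq_nonneg (α * ‖b - b'‖)]

open MeasureTheory in
lemma volume_image_le_of_lipschitzOn (g : Plane → Plane) (s : Set Plane) (K : NNReal)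
    (hg : LipschitzOnWith K g s) : volume (g '' s) ≤ (K : ENNReal) ^ 2 * volume s := by
  have : (Measure.hausdorffMeasure 2 : Measure Plane).IsAddHaarMeasure := by
    simpa using MeasureTheory.isAddHaarMeasure_hausdorffMeasure (E := Plane)
  have hv := Measure.isAddLeftInvariant_eq_smul (volume : Measure Plane)
    (Measure.hausdorffMeasure 2 : Measure Plane)
  rw [hv]
  have := hg.hausdorffMeasure_image_le (d := 2) (by norm_num)
  simp only [Measure.smul_apply]
  rw [ENNReal.smul_def, ENNReal.smul_def, smul_eq_mul, smul_eq_mul, mul_left_comm]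
  gcongr
  simpa using this

open MeasureTheory in
lemma volume_halfMorph (X B : Set Plane) (hBne : B.Nonempty) (hB : IsCompact B)
    (α : ℝ) (h0 : 0 < α) (h1 : α < 1) :
    ENNReal.ofReal ((1 - α) ^ 2) * volume X ≤ volume (halfMorph X B α) := by
  have hex : ∀ a : Plane, ∃ b ∈ B, infDist a B = dist a b :=
    fun a => hB.exists_infDist_eq_dist hBne a
  choose n hnB hn using hex
  set f : Plane → Plane := fun a => (1 - α) • a + α • n a with hf
  have h1' : 0 < 1 - α := by linarith
  have hexp : ∀ a a', (1 - α) * dist a a' ≤ dist (f a) (f a') := fun a a' =>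
    morph_expand B α h0 h1 a a' _ _ (hnB a) (hnB a') (hn a).symm (hn a').symm
  have hinj : Function.Injective f := by
    intro a a' h
    have := hexp a a'
    rw [h, dist_self] at this
    exact dist_le_zero.1 (by nlinarith [dist_nonneg (x := a) (y := a')])
  have hli := Function.leftInverse_invFun hinj
  have hlip : LipschitzOnWith (Real.toNNReal (1 - α)⁻¹) (Function.invFun f) (f '' X) := by
    refine LipschitzOnWith.of_dist_le_mul ?_
    rintro _ ⟨a, -, rfl⟩ _ ⟨a', -, rfl⟩
    rw [hli a, hli a', Real.coe_toNNReal _ (inv_pos.2 h1').le, inv_mul_eq_div, le_div_iff₀ h1',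
      mul_comm]
    exact hexp a a'
  have hv := volume_image_le_of_lipschitzOn _ _ _ hlip
  rw [← image_comp, hli.comp_eq_id, image_id] at hv
  have hsub : f '' X ⊆ halfMorph X B α := by
    rintro _ ⟨a, ha, rfl⟩
    exact ⟨a, ha, n a, hnB a, (hn a).symm, rfl⟩
  refine le_trans ?_ (measure_mono hsub)
  calc ENNReal.ofReal ((1 - α) ^ 2) * volume X
      ≤ ENNReal.ofReal ((1 - α) ^ 2) *
        ((Real.toNNReal (1 - α)⁻¹ : ENNReal) ^ 2 * volume (f '' X)) := by gcongr
    _ = volume (f '' X) := by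
        rw [← mul_assoc]
        have : ENNReal.ofReal ((1 - α) ^ 2) * (Real.toNNReal (1 - α)⁻¹ : ENNReal) ^ 2 = 1 := by
          change ENNReal.ofReal ((1 - α) ^ 2) * (ENNReal.ofReal (1 - α)⁻¹) ^ 2 = 1
          rw [← ENNReal.ofReal_pow (inv_pos.2 h1').le, ← ENNReal.ofReal_mul (by positivity),
            ← mul_pow, mul_inv_cancel₀ h1'.ne']
          simp
        rw [this, one_mul]

lemma isCompact_halfMorph (A B : Set Plane) (hA : IsCompact A) (hB : IsCompact B) (α : ℝ) :
    IsCompact (halfMorph A B α) := by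
  have hc : IsClosed {q : Plane × Plane | dist q.1 q.2 = infDist q.1 B} :=
    isClosed_eq (by fun_prop) ((continuous_infDist_pt B).comp continuous_fst)
  have := ((hA.prod hB).inter_right hc).image
    (f := fun q : Plane × Plane => (1 - α) • q.1 + α • q.2) (by fun_prop)
  convert this using 1
  ext p
  constructor
  · rintro ⟨a, ha, b, hb, h, rfl⟩
    exact ⟨(a, b), ⟨⟨ha, hb⟩, h⟩, rfl⟩
  · rintro ⟨⟨a, b⟩, ⟨⟨ha, hb⟩, h⟩, rfl⟩
    exact ⟨a, ha, b, hb, h, rfl⟩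

lemma disjoint_halfMorph (A B : Set Plane) (α : ℝ) (h0 : 0 < α) (h1 : α < 1) :
    Disjoint (halfMorph (A \ B) B α) B := by
  rw [Set.disjoint_left]
  rintro _ ⟨a, ⟨ha, haB⟩, b, hb, h, rfl⟩ hp
  have := infDist_le_dist_of_mem (x := a) hp
  rw [dist_left_morph a b α h0, ← h] at this
  have : 0 < dist a b := dist_pos.2 (fun e => haB (e ▸ hb))
  nlinarith

lemma halfMorph_split (A B : Set Plane) (α : ℝ) :
    halfMorph A B α = (A ∩ B) ∪ halfMorph (A \ B) B α := by
  ext p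
  constructor
  · rintro ⟨a, ha, b, hb, h, rfl⟩
    by_cases haB : a ∈ B
    · left
      rw [infDist_zero_of_mem haB, dist_eq_zero] at h
      subst h
      rw [← add_smul, sub_add_cancel, one_smul]
      exact ⟨ha, haB⟩
    · exact Or.inr ⟨a, ⟨ha, haB⟩, b, hb, h, rfl⟩
  · rintro (⟨ha, hb⟩ | ⟨a, ha, b, hb, h, rfl⟩)
    · refine ⟨p, ha, p, hb, by rw [infDist_zero_of_mem hb, dist_self], by module⟩
    · exact ⟨a, ha.1, b, hb, h, rfl⟩

/-- Points in the overlap of the two half morphs lie on the sphere of an open disk that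
misses the overlap. -/
lemma overlap_porous (A B : Set Plane) (α : ℝ) (h0 : 0 < α) (h1 : α < 1) (p : Plane)
    (hp : p ∈ halfMorph (A \ B) B α ∩ halfMorph (B \ A) A (1 - α)) :
    ∃ a, a ≠ p ∧ ∀ q, dist q a < dist p a →
      q ∉ halfMorph (A \ B) B α ∩ halfMorph (B \ A) A (1 - α) := by
  have level : ∀ p a b a' b' : Plane, a ∈ A → b ∈ B → dist a b = infDist a B →
      p = (1 - α) • a + α • b → b' ∈ B → a' ∈ A → dist b' a' = infDist b' A →
      p = (1 - (1 - α)) • b' + (1 - α) • a' →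
      infDist p A = α * dist a b ∧ infDist p B = (1 - α) * dist a b := by
    intro p a b a' b' ha hb h hp hb' ha' h' hp'
    have d1 := dist_left_morph a b α h0
    have d3 := dist_left_morph b' a' (1 - α) (by linarith)
    have d4 := dist_right_morph b' a' (1 - α) (by linarith)
    rw [← hp] at d1
    rw [← hp'] at d3 d4
    have i1 : infDist p A ≤ dist p a := infDist_le_dist_of_mem ha
    have i2 : infDist p B ≤ dist p b' := infDist_le_dist_of_mem hb'
    have i3 : infDist b' A ≤ infDist p A + dist b' p := infDist_le_infDist_add_dist
    have i4 : infDist a B ≤ infDist p B + dist a p := infDist_le_infDist_add_dist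
    rw [dist_comm] at i1 i2
    have r1 : dist b' a' ≤ dist a b := by
      refine le_of_mul_le_mul_left ?_ h0
      linarith
    have r2 : dist a b ≤ dist b' a' := by
      refine le_of_mul_le_mul_left ?_ (sub_pos.2 h1)
      linarith
    have r : dist a b = dist b' a' := le_antisymm r2 r1
    rw [← r] at d3 h'
    constructor <;> linarith
  obtain ⟨⟨a, ⟨ha, haB⟩, b, hb, h, hpe⟩, -⟩ := hp
  have hr : 0 < dist a b := dist_pos.2 (fun e => haB (e ▸ hb))
  have d1 := dist_left_morph a b α h0
  rw [← hpe] at d1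
  refine ⟨a, ?_, ?_⟩
  · rw [← dist_pos, d1]; positivity
  · rintro q hq ⟨⟨c, ⟨hc, -⟩, d, hd, k, hqe⟩, d', ⟨hd', -⟩, c', hc', k', hqe'⟩
    obtain ⟨f1, f2⟩ := level q c d c' d' hc hd k hqe hd' hc' k' hqe'
    rw [dist_comm p a, d1] at hq
    have i1 : infDist q A ≤ dist q a := infDist_le_dist_of_mem ha
    have i4 : infDist a B ≤ infDist q B + dist a q := infDist_le_infDist_add_dist
    rw [dist_comm a q] at i4
    have r1 : dist c d < dist a b := by
      refine lt_of_mul_lt_mul_left ?_ h0.le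
      linarith
    have r2 : dist a b < dist c d := by
      refine lt_of_mul_lt_mul_left ?_ (sub_pos.2 h1).le
      linarith
    linarith

open MeasureTheory Filter Topology in
lemma volume_zero_of_porous (S : Set Plane)
    (hS : ∀ p ∈ S, ∃ a, a ≠ p ∧ ∀ q, dist q a < dist p a → q ∉ S) : volume S = 0 := by
  have hae := IsUnifLocDoublingMeasure.ae_tendsto_measure_inter_div (volume : Measure Plane) S 2
  rw [← Measure.restrict_eq_zero, ← ae_eq_bot]
  by_contra hne
  have : NeBot (ae (volume.restrict S)) := ⟨hne⟩
  have hfreq : ∃ᶠ p in ae (volume.restrict S), p ∈ S := by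
    intro hn
    have h0 : (volume.restrict S) S = 0 := by
      refine measure_mono_null ?_ hn
      intro x hx
      simpa using hx
    rw [Measure.restrict_apply_self] at h0
    exact hne (by rw [ae_eq_bot, Measure.restrict_eq_zero, h0])
  obtain ⟨p, hpS, hp⟩ := (hfreq.and_eventually hae).exists
  obtain ⟨a, hap, hq⟩ := hS p hpS
  have hR : 0 < dist p a := dist_pos.2 hap.symm
  set R := dist p a with hRdef
  have hlim : Tendsto (fun t : ℝ => t * R / 2) (𝓝[>] 0) (𝓝[>] 0) := by
    refine tendsto_nhdsWithin_iff.2 ⟨?_, ?_⟩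
    · have : Tendsto (fun t : ℝ => t * R / 2) (𝓝 0) (𝓝 (0 * R / 2)) :=
        Continuous.tendsto (by fun_prop) 0
      simp only [zero_mul, zero_div] at this
      exact this.mono_left nhdsWithin_le_nhds
    · filter_upwards [self_mem_nhdsWithin] with t ht
      have : 0 < t := ht
      exact Set.mem_Ioi.2 (by positivity)
  have ht := hp (fun t : ℝ => (1 - t) • p + t • a) (fun t : ℝ => t * R / 2) hlim (by
    filter_upwards [self_mem_nhdsWithin] with t ht
    rw [mem_closedBall, dist_left_morph p a t ht]
    linarith)
  have hz : (fun t : ℝ => volume (S ∩ closedBall ((1 - t) • p + t • a) (t * R / 2)) /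
      volume (closedBall ((1 - t) • p + t • a) (t * R / 2))) =ᶠ[𝓝[>] 0] fun _ => 0 := by
    filter_upwards [Ioo_mem_nhdsGT (zero_lt_one' ℝ)] with t ht
    have : S ∩ closedBall ((1 - t) • p + t • a) (t * R / 2) = ∅ := by
      rw [Set.eq_empty_iff_forall_notMem]
      rintro q ⟨hqS, hqb⟩
      refine hq q ?_ hqS
      rw [mem_closedBall] at hqb
      have e := dist_right_morph p a t ht.2
      rw [dist_comm] at e
      have := dist_triangle q ((1 - t) • p + t • a) a
      have : 0 < t * R := mul_pos ht.1 hR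
      linarith
    rw [this]
    simp
  have := tendsto_nhds_unique (tendsto_const_nhds.congr' hz.symm) ht
  exact zero_ne_one this

open MeasureTheory in
theorem voronoiMorph_volume_lower_bound (A B : Set Plane) (hAne : A.Nonempty)
    (hBne : B.Nonempty) (hA : IsCompact A) (hB : IsCompact B)
    (α : ℝ) (hα : α ∈ Set.Ioo (0 : ℝ) 1) :
    ENNReal.ofReal ((1 - α) ^ 2) * volume A + ENNReal.ofReal (α ^ 2) * volume B ≤
      volume (voronoiMorph A B α) := by
  obtain ⟨h0, h1⟩ := hα
  have hT : voronoiMorph A B α = halfMorph A B α ∪ halfMorph B A (1 - α) := by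
    unfold voronoiMorph halfMorph
    congr 1
    ext p
    simp only [sub_sub_cancel, add_comm]
  have hAB : MeasurableSet (A ∩ B) := (hA.inter hB).measurableSet
  have v1 : volume (A ∩ B) + ENNReal.ofReal ((1 - α) ^ 2) * volume (A \ B)
      ≤ volume (halfMorph A B α) := by
    rw [halfMorph_split, measure_union' ((disjoint_halfMorph A B α h0 h1).symm.mono_left
      inter_subset_right) hAB]
    gcongr
    exact volume_halfMorph _ _ hBne hB α h0 h1
  have v2 : ENNReal.ofReal (α ^ 2) * volume (B \ A) ≤ volume (halfMorph (B \ A) A (1 - α)) := by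
    have := volume_halfMorph (B \ A) A hAne hA (1 - α) (by linarith) (by linarith)
    rwa [sub_sub_cancel] at this
  have hnull : volume (halfMorph A B α ∩ halfMorph (B \ A) A (1 - α)) = 0 := by
    refine measure_mono_null ?_ (volume_zero_of_porous _ (overlap_porous A B α h0 h1))
    rintro p ⟨hp, hp2⟩
    rw [halfMorph_split] at hp
    rcases hp with hp | hp
    · exact absurd hp.1 (Set.disjoint_left.1
        (disjoint_halfMorph B A (1 - α) (by linarith) (by linarith)) hp2)
    · exact ⟨hp, hp2⟩
  have hsub : halfMorph A B α ∪ halfMorph (B \ A) A (1 - α) ⊆ voronoiMorph A B α := by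
    rw [hT, halfMorph_split B A]
    exact union_subset_union_right _ subset_union_right
  refine le_trans ?_ (measure_mono hsub)
  have hu : volume (halfMorph A B α ∪ halfMorph (B \ A) A (1 - α)) =
      volume (halfMorph A B α) + volume (halfMorph (B \ A) A (1 - α)) :=
    measure_union₀' (isCompact_halfMorph A B hA hB α).measurableSet.nullMeasurableSet hnull
  rw [hu]
  refine le_trans ?_ (add_le_add v1 v2)
  rw [← measure_inter_add_sdiff A hB.measurableSet, ← measure_inter_add_sdiff B hA.measurableSet,
    inter_comm B A, mul_add, mul_add]
  have hc : ENNReal.ofReal ((1 - α) ^ 2) * volume (A ∩ B) + ENNReal.ofReal (α ^ 2) * volume (A ∩ B)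
      ≤ volume (A ∩ B) := by
    rw [← add_mul, ← ENNReal.ofReal_add (by positivity) (by positivity)]
    refine mul_le_of_le_one_left zero_le ?_
    rw [ENNReal.ofReal_le_one]
    nlinarith
  calc _ = (ENNReal.ofReal ((1 - α) ^ 2) * volume (A ∩ B) +
        ENNReal.ofReal (α ^ 2) * volume (A ∩ B)) +
        (ENNReal.ofReal ((1 - α) ^ 2) * volume (A \ B) +
        ENNReal.ofReal (α ^ 2) * volume (B \ A)) := by ring
    _ ≤ volume (A ∩ B) + (ENNReal.ofReal ((1 - α) ^ 2) * volume (A \ B) +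
        ENNReal.ofReal (α ^ 2) * volume (B \ A)) := by gcongr
    _ = _ := by ring
end
end
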